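/- Let ρ : ℝ³ → ℝ be continuous with support contained in the closed ball of radius R centered at 0, and suppose ∫_{ℝ³} y^α ρ(y) dy = 0 for every multi-index α with |α| ≤ 4. Let 0 ≤ v < 1, γ = (1 − v²)^{−1/2}, and define u(x) = (γ/(4π))·∫_{ℝ³} ρ(y)/√(γ²(x₁−y₁)² + (x₂−y₂)² + (x₃−y₃)²) dy. Then u is differentiable at every x with |x| > R, and there exists a constant C such that ‖∇u(x)‖ ≤ C·|x|^{−7} for all x with |x| ≥ 2R + 1. -/

import Mathlib

open MeasureTheory

/-!
For `|y| < |x| / 2` expand the gradient `f` of the kernel `K` at `x` in powers of `-y`. Integrated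
against `ρ`, the Taylor polynomial of degree `n` only sees moments of order at most `n`, hence
vanishes. As `K` is homogeneous of degree `-1`, the derivative of order `n + 1` of `f` is
homogeneous of degree `-(n + 3)`, so it is `O(|x|^{-(n + 3)})` along the segment from `x` to
`x - y`, which stays at distance at least `|x| / 2` from the singularity.
-/

open Set Topology Metric
open ContinuousLinearMap (lsmul)
open scoped ContDiff Nat Convolution

section Taylor

variable {E F : Type*} [NormedAddCommGroup E] [NormedSpace ℝ E]
  [NormedAddCommGroup F] [NormedSpace ℝ F] {f : E → F} {n : ℕ} {x y : E}

theorem iteratedDerivWithin_comp_line (hf : ∀ t ∈ Icc (0 : ℝ) 1, ContDiffAt ℝ n f (x + t • y))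
    {k : ℕ} (hk : k ≤ n) {t : ℝ} (ht : t ∈ Icc (0 : ℝ) 1) :
    iteratedDerivWithin k (fun s : ℝ => f (x + s • y)) (Icc 0 1) t =
      iteratedFDeriv ℝ k f (x + t • y) (fun _ => y) := by
  induction k generalizing t with
  | zero => simp
  | succ k ih =>
    have hdiff : DifferentiableAt ℝ (iteratedFDeriv ℝ k f) (x + t • y) :=
      (hf t ht).differentiableAt_iteratedFDeriv (mod_cast hk)
    have hline : HasDerivAt (fun s : ℝ => x + s • y) y t := by
      simpa using ((hasDerivAt_id t).smul_const y).const_add x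
    have hderiv : HasDerivAt (fun s : ℝ => iteratedFDeriv ℝ k f (x + s • y) (fun _ => y))
        (iteratedFDeriv ℝ (k + 1) f (x + t • y) (fun _ => y)) t :=
      (ContinuousMultilinearMap.apply ℝ (fun _ : Fin k => E) F fun _ => y).hasFDerivAt
        |>.comp_hasDerivAt t (hdiff.hasFDerivAt.comp_hasDerivAt t hline)
    rw [iteratedDerivWithin_succ, derivWithin_congr (fun s hs => ih (by lia) hs) (ih (by lia) ht)]
    exact hderiv.hasDerivWithinAt.derivWithin (uniqueDiffOn_Icc zero_lt_one t ht)

/-- The Taylor polynomial of degree `n` of `f` at `x`, as a function of the increment `y`. -/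
noncomputable def taylorAt (f : E → F) (n : ℕ) (x y : E) : F :=
  ∑ k ∈ Finset.range (n + 1), (k ! : ℝ)⁻¹ • iteratedFDeriv ℝ k f x (fun _ => y)

theorem continuous_taylorAt (f : E → F) (n : ℕ) (x : E) : Continuous (taylorAt f n x) := by
  unfold taylorAt
  fun_prop

theorem norm_sub_taylorAt_le {C : ℝ}
    (hf : ∀ t ∈ Icc (0 : ℝ) 1, ContDiffAt ℝ (n + 1) f (x + t • y))
    (hC : ∀ t ∈ Icc (0 : ℝ) 1, ‖iteratedFDeriv ℝ (n + 1) f (x + t • y)‖ ≤ C) :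
    ‖f (x + y) - taylorAt f n x y‖ ≤ C * ‖y‖ ^ (n + 1) / n ! := by
  have hderiv {k : ℕ} (hk : k ≤ n + 1) {t : ℝ} (ht : t ∈ Icc (0 : ℝ) 1) :=
    iteratedDerivWithin_comp_line (n := n + 1) hf hk ht
  have hsmooth : ContDiffOn ℝ (n + 1) (fun t : ℝ => f (x + t • y)) (Icc 0 1) := fun t ht =>
    ((hf t ht).comp t (f := fun t : ℝ => x + t • y) (by fun_prop)).contDiffWithinAt
  have hbound : ∀ t ∈ Icc (0 : ℝ) 1,
      ‖iteratedDerivWithin (n + 1) (fun s : ℝ => f (x + s • y)) (Icc 0 1) t‖ ≤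
        C * ‖y‖ ^ (n + 1) := by
    intro t ht
    rw [hderiv le_rfl ht]
    simpa using (iteratedFDeriv ℝ (n + 1) f (x + t • y)).le_of_opNorm_le (hC t ht) fun _ => y
  have htaylor : taylorWithinEval (fun t : ℝ => f (x + t • y)) n (Icc 0 1) 0 1 =
      taylorAt f n x y := by
    rw [taylor_within_apply, taylorAt]
    refine Finset.sum_congr rfl fun k hk => ?_
    rw [hderiv (Finset.mem_range.1 hk).le (left_mem_Icc.2 zero_le_one)]
    simp
  simpa [htaylor] using
    taylor_mean_remainder_bound zero_le_one hsmooth (right_mem_Icc.2 zero_le_one) hbound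

end Taylor

section Homogeneous

variable {E F : Type*} [NormedAddCommGroup E] [NormedSpace ℝ E]
  [NormedAddCommGroup F] [NormedSpace ℝ F] {f : E → F} {m : ℝ}

/-- Positive homogeneity of real degree `m`. The value at `0` is constrained too, so that for
`m ≠ 0` a kernel singular at the origin has to take the value `0` there. -/
def IsPosHomogeneous (f : E → F) (m : ℝ) : Prop :=
  ∀ ⦃r : ℝ⦄, 0 < r → ∀ z, f (r • z) = r ^ m • f z

namespace IsPosHomogeneous

theorem fderiv (hf : IsPosHomogeneous f m) : IsPosHomogeneous (fderiv ℝ f) (m - 1) := by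
  intro r hr z
  have hscale : r • _root_.fderiv ℝ f (r • z) = r ^ m • _root_.fderiv ℝ f z := by
    rw [← fderiv_comp_smul, funext (hf hr)]
    exact congrFun (fderiv_const_smul_field (r ^ m)) z
  rw [Real.rpow_sub_one hr.ne', div_eq_inv_mul, mul_smul, ← hscale, inv_smul_smul₀ hr.ne']

theorem iteratedFDeriv (hf : IsPosHomogeneous f m) (k : ℕ) :
    IsPosHomogeneous (iteratedFDeriv ℝ k f) (m - k) := by
  induction k with
  | zero =>
    intro r hr z
    ext
    simp [hf hr z]
  | succ k ih =>
    intro r hr z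
    simp only [iteratedFDeriv_succ_eq_comp_left, Function.comp_apply, ih.fderiv hr z, map_smul]
    rw [Nat.cast_succ, sub_sub]

theorem exists_norm_le [FiniteDimensional ℝ E] (hf : IsPosHomogeneous f m)
    (hcont : ContinuousOn f {0}ᶜ) : ∃ M, 0 ≤ M ∧ ∀ z ≠ 0, ‖f z‖ ≤ M * ‖z‖ ^ m := by
  obtain ⟨M, hM⟩ := (isCompact_sphere (0 : E) 1).exists_bound_of_continuousOn
    (hcont.mono fun z hz => ne_of_mem_sphere hz one_ne_zero)
  refine ⟨max M 0, le_max_right _ _, fun z hz => ?_⟩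
  have hz' : 0 < ‖z‖ := norm_pos_iff.2 hz
  calc ‖f z‖ = ‖f (‖z‖ • ‖z‖⁻¹ • z)‖ := by rw [smul_inv_smul₀ hz'.ne']
    _ = ‖f (‖z‖⁻¹ • z)‖ * ‖z‖ ^ m := by
      rw [hf hz', norm_smul, Real.norm_of_nonneg (by positivity), mul_comm]
    _ ≤ max M 0 * ‖z‖ ^ m := by
      gcongr
      exact (hM _ (by simp [norm_smul, hz])).trans (le_max_left _ _)

theorem exists_norm_sub_taylorAt_le [FiniteDimensional ℝ E] {n : ℕ}
    (hhom : IsPosHomogeneous f m) (hm : m ≤ n + 1) (hf : ∀ z ≠ 0, ContDiffAt ℝ (n + 1) f z) :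
    ∃ C, ∀ x y : E, x ≠ 0 → 2 * ‖y‖ ≤ ‖x‖ →
      ‖f (x + y) - taylorAt f n x y‖ ≤ C * ‖x‖ ^ (m - (n + 1)) * ‖y‖ ^ (n + 1) := by
  obtain ⟨M, hM0, hM⟩ := (hhom.iteratedFDeriv (n + 1)).exists_norm_le fun z hz =>
    ((hf z hz).continuousAt_iteratedFDeriv (mod_cast le_rfl)).continuousWithinAt
  refine ⟨M * 2⁻¹ ^ (m - (n + 1)) / n !, fun x y hx hxy => ?_⟩
  have hx' : 0 < ‖x‖ := norm_pos_iff.2 hx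
  have hfar : ∀ t ∈ Icc (0 : ℝ) 1, 2⁻¹ * ‖x‖ ≤ ‖x + t • y‖ := by
    intro t ht
    have hty : ‖t • y‖ ≤ ‖y‖ := by
      rw [norm_smul, Real.norm_of_nonneg ht.1]
      exact mul_le_of_le_one_left (norm_nonneg y) ht.2
    linarith [norm_sub_le_norm_add x (t • y)]
  have hne : ∀ t ∈ Icc (0 : ℝ) 1, x + t • y ≠ 0 := fun t ht =>
    norm_pos_iff.1 <| (by positivity : 0 < 2⁻¹ * ‖x‖).trans_le (hfar t ht)
  have hbound : ∀ t ∈ Icc (0 : ℝ) 1, ‖_root_.iteratedFDeriv ℝ (n + 1) f (x + t • y)‖ ≤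
      M * (2⁻¹ * ‖x‖) ^ (m - (n + 1)) := by
    intro t ht
    refine (hM _ (hne t ht)).trans ?_
    rw [Nat.cast_succ]
    gcongr M * ?_
    exact Real.rpow_le_rpow_of_nonpos (by positivity) (hfar t ht) (by linarith)
  refine (norm_sub_taylorAt_le (fun t ht => hf _ (hne t ht)) hbound).trans_eq ?_
  rw [Real.mul_rpow (by positivity) hx'.le]
  ring

end IsPosHomogeneous

end Homogeneous

section Convolution

variable {E F : Type*} [NormedAddCommGroup E] [NormedSpace ℝ E] [FiniteDimensional ℝ E]
  [MeasurableSpace E] [BorelSpace E] {μ : Measure E}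
  [NormedAddCommGroup F] [NormedSpace ℝ F]
  {ρ : E → ℝ} {S : Set E} {f : E → F} {x : E}

theorem integrable_smul_of_support_subset_isCompact (hρ : Integrable ρ μ) (hS : IsCompact S)
    (hsupp : Function.support ρ ⊆ S) (hf : ContinuousOn f S) :
    Integrable (fun y => ρ y • f y) μ :=
  (integrableOn_iff_integrable_of_support_subset
    ((Function.support_smul_subset_left ρ f).trans hsupp)).1
    (hρ.integrableOn.smul_continuousOn hf hS)

theorem convolutionExistsAt_of_continuousOn_compl_zero (hρ : Integrable ρ μ) (hS : IsCompact S)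
    (hsupp : Function.support ρ ⊆ S) (hf : ContinuousOn f {0}ᶜ) (hx : x ∉ S) :
    ConvolutionExistsAt ρ f x (lsmul ℝ ℝ) μ :=
  integrable_smul_of_support_subset_isCompact hρ hS hsupp <|
    hf.comp (by fun_prop) fun _ hy => sub_ne_zero.2 (ne_of_mem_of_not_mem hy hx).symm

theorem hasFDerivAt_convolution_of_contDiffAt_ne_zero (hρ : Integrable ρ μ) (hS : IsCompact S)
    (hsupp : Function.support ρ ⊆ S) (hf : ∀ z ≠ 0, ContDiffAt ℝ 1 f z) (hx : x ∉ S) :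
    HasFDerivAt (ρ ⋆[lsmul ℝ ℝ, μ] f) ((ρ ⋆[lsmul ℝ ℝ, μ] fderiv ℝ f) x) x := by
  have hcont : ContinuousOn f {0}ᶜ := fun z hz => (hf z hz).continuousAt.continuousWithinAt
  have hcont' : ContinuousOn (fderiv ℝ f) {0}ᶜ := fun z hz =>
    ((hf z hz).continuousAt_fderiv one_ne_zero).continuousWithinAt
  obtain ⟨ε, hε, hball⟩ := nhds_basis_closedBall.mem_iff.1 (hS.isClosed.isOpen_compl.mem_nhds hx)
  have hne : ∀ x' ∈ closedBall x ε, ∀ y ∈ S, x' - y ≠ 0 := fun x' hx' y hy =>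
    sub_ne_zero.2 (ne_of_mem_of_not_mem hy (hball hx')).symm
  obtain ⟨M, hM⟩ := ((isCompact_closedBall x ε).prod hS).exists_bound_of_continuousOn
    (f := fun p => fderiv ℝ f (p.1 - p.2))
    (hcont'.comp (by fun_prop) fun p hp => hne p.1 hp.1 p.2 hp.2)
  have hbound : ∀ y, ∀ x' ∈ closedBall x ε, ‖ρ y • fderiv ℝ f (x' - y)‖ ≤ ‖ρ y‖ * M := by
    intro y x' hx'
    by_cases hy : ρ y = 0
    · simp [hy]
    · rw [norm_smul]
      gcongr
      exact hM (x', y) ⟨hx', hsupp hy⟩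
  have hderiv : ∀ y, ∀ x' ∈ closedBall x ε,
      HasFDerivAt (fun z => ρ y • f (z - y)) (ρ y • fderiv ℝ f (x' - y)) x' := by
    intro y x' hx'
    by_cases hy : ρ y = 0
    · simpa [hy] using hasFDerivAt_const (0 : F) x'
    · have hdiff := ((hf _ (hne x' hx' y (hsupp hy))).differentiableAt one_ne_zero).hasFDerivAt
      exact ((hasFDerivAt_comp_sub y).2 hdiff).const_smul (ρ y)
  have hmeas : ∀ᶠ x' in 𝓝 x, AEStronglyMeasurable (fun y => ρ y • f (x' - y)) μ := by
    filter_upwards [hS.isClosed.isOpen_compl.mem_nhds hx] with x' hx'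
    exact (convolutionExistsAt_of_continuousOn_compl_zero hρ hS hsupp hcont
      hx').aestronglyMeasurable
  exact hasFDerivAt_integral_of_dominated_of_fderiv_le (closedBall_mem_nhds x hε) hmeas
    (convolutionExistsAt_of_continuousOn_compl_zero hρ hS hsupp hcont hx)
    (convolutionExistsAt_of_continuousOn_compl_zero hρ hS hsupp hcont' hx).aestronglyMeasurable
    (.of_forall hbound) (hρ.norm.mul_const M) (.of_forall hderiv)

end Convolution

section Moments

/-- All moments of `ρ` of order at most `n` vanish. A moment is encoded without coordinates, as
the integral of `ρ` against the diagonal of a multilinear map with values in `F`. -/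
def HasVanishingMoments {E : Type*} [NormedAddCommGroup E] [NormedSpace ℝ E]
    [MeasurableSpace E] (F : Type*) [NormedAddCommGroup F] [NormedSpace ℝ F] (μ : Measure E)
    (ρ : E → ℝ) (n : ℕ) : Prop :=
  ∀ k ≤ n, ∀ P : E [×k]→L[ℝ] F, ∫ y, ρ y • P (fun _ => y) ∂μ = 0

variable {E F : Type*} [NormedAddCommGroup E] [NormedSpace ℝ E] [FiniteDimensional ℝ E]
  [MeasurableSpace E] [BorelSpace E] {μ : Measure E}
  [NormedAddCommGroup F] [NormedSpace ℝ F]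
  {ρ : E → ℝ} {S : Set E} {f : E → F} {n : ℕ} {m R : ℝ}

theorem HasVanishingMoments.integral_smul_taylorAt_neg (hmom : HasVanishingMoments F μ ρ n)
    (hρ : Integrable ρ μ) (hS : IsCompact S) (hsupp : Function.support ρ ⊆ S) (f : E → F) (x : E) :
    ∫ y, ρ y • taylorAt f n x (-y) ∂μ = 0 := by
  simp only [taylorAt, Finset.smul_sum]
  rw [integral_finsetSum _ fun k _ =>
    integrable_smul_of_support_subset_isCompact hρ hS hsupp (by fun_prop)]
  refine Finset.sum_eq_zero fun k hk => ?_
  simpa using hmom k (Finset.mem_range_succ_iff.1 hk)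
    ((k ! : ℝ)⁻¹ • (iteratedFDeriv ℝ k f x).compContinuousLinearMap
      fun _ => -ContinuousLinearMap.id ℝ E)

theorem IsPosHomogeneous.exists_norm_convolution_le (hhom : IsPosHomogeneous f m)
    (hm : m ≤ n + 1) (hf : ∀ z ≠ 0, ContDiffAt ℝ (n + 1) f z) (hρ : Integrable ρ μ)
    (hsupp : Function.support ρ ⊆ closedBall 0 R) (hmom : HasVanishingMoments F μ ρ n) :
    ∃ C, ∀ x, 2 * R < ‖x‖ → ‖(ρ ⋆[lsmul ℝ ℝ, μ] f) x‖ ≤ C * ‖x‖ ^ (m - (n + 1)) := by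
  obtain ⟨C, hC⟩ := hhom.exists_norm_sub_taylorAt_le hm hf
  have hB := isCompact_closedBall (0 : E) R
  refine ⟨C * ∫ y, ‖ρ y‖ * ‖y‖ ^ (n + 1) ∂μ, fun x hx => ?_⟩
  have hfar : ∀ y, ρ y ≠ 0 → x ≠ 0 ∧ 2 * ‖y‖ ≤ ‖x‖ := fun y hy => by
    have hyR : ‖y‖ ≤ R := by simpa using hsupp hy
    exact ⟨norm_pos_iff.1 (by linarith [norm_nonneg y]), by linarith⟩
  have hxR : x ∉ closedBall 0 R := by
    rw [mem_closedBall_zero_iff]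
    linarith [norm_nonneg x]
  have hconv : Integrable (fun y => ρ y • f (x - y)) μ :=
    convolutionExistsAt_of_continuousOn_compl_zero hρ hB hsupp
      (fun z hz => (hf z hz).continuousAt.continuousWithinAt) hxR
  have htaylor : Integrable (fun y => ρ y • taylorAt f n x (-y)) μ :=
    integrable_smul_of_support_subset_isCompact hρ hB hsupp
      ((continuous_taylorAt f n x).comp continuous_neg).continuousOn
  have hmoment : Integrable (fun y => ‖ρ y‖ * ‖y‖ ^ (n + 1)) μ := by
    simpa [norm_smul] using (integrable_smul_of_support_subset_isCompact hρ hB hsupp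
      (f := fun y => ‖y‖ ^ (n + 1)) (by fun_prop)).norm
  calc ‖(ρ ⋆[lsmul ℝ ℝ, μ] f) x‖
      = ‖∫ y, ρ y • (f (x - y) - taylorAt f n x (-y)) ∂μ‖ := by
        simp only [smul_sub]
        rw [integral_sub hconv htaylor, hmom.integral_smul_taylorAt_neg hρ hB hsupp, sub_zero,
          convolution_lsmul]
    _ ≤ ∫ y, C * ‖x‖ ^ (m - (n + 1)) * (‖ρ y‖ * ‖y‖ ^ (n + 1)) ∂μ := by
        refine norm_integral_le_of_norm_le (hmoment.const_mul _) (.of_forall fun y => ?_)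
        by_cases hy : ρ y = 0
        · simp [hy]
        · have hremainder := hC x (-y) (hfar y hy).1 (by simpa using (hfar y hy).2)
          rw [norm_smul, mul_left_comm]
          gcongr
          simpa [sub_eq_add_neg] using hremainder
    _ = C * (∫ y, ‖ρ y‖ * ‖y‖ ^ (n + 1) ∂μ) * ‖x‖ ^ (m - (n + 1)) := by
        rw [integral_const_mul]
        ring

end Moments

section Coordinates

variable {ι F : Type*} [Fintype ι] [NormedAddCommGroup F] [NormedSpace ℝ F]
  {μ : Measure (EuclideanSpace ℝ ι)} {ρ : EuclideanSpace ℝ ι → ℝ} {S : Set (EuclideanSpace ℝ ι)}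
  {n : ℕ}

theorem prod_comp_eq_prod_pow_card_fiber {κ M : Type*} [Fintype κ] [DecidableEq ι] [CommMonoid M]
    (r : κ → ι) (y : ι → M) :
    ∏ i, y (r i) = ∏ j, y j ^ Finset.card {i | r i = j} := by
  simpa only [Finset.prod_const] using (Finset.prod_fiberwise' Finset.univ r y).symm

theorem continuousMultilinearMap_diag_eq_sum [DecidableEq ι] {k : ℕ}
    (P : EuclideanSpace ℝ ι [×k]→L[ℝ] F) (y : EuclideanSpace ℝ ι) :
    P (fun _ => y) =
      ∑ r : Fin k → ι, (∏ i, y (r i)) • P fun i => EuclideanSpace.single (r i) 1 := by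
  conv_lhs => rw [← (EuclideanSpace.basisFun ι ℝ).sum_repr y]
  rw [P.map_sum]
  refine Finset.sum_congr rfl fun r _ => ?_
  simpa using P.map_smul_univ (fun i => y (r i)) fun i => EuclideanSpace.basisFun ι ℝ (r i)

theorem hasVanishingMoments_of_integral_monomial_eq_zero [CompleteSpace F] (hρ : Integrable ρ μ)
    (hS : IsCompact S) (hsupp : Function.support ρ ⊆ S)
    (hmom : ∀ α : ι → ℕ, ∑ i, α i ≤ n → ∫ y, (∏ i, y i ^ α i) * ρ y ∂μ = 0) :
    HasVanishingMoments F μ ρ n := by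
  classical
  intro k hk P
  have hmonomial : ∀ r : Fin k → ι, ∫ y, ρ y * ∏ i, y (r i) ∂μ = 0 := by
    intro r
    rw [← hmom fun j => Finset.card {i | r i = j}]
    · simp only [prod_comp_eq_prod_pow_card_fiber, mul_comm]
    · have hcard : k = ∑ j, Finset.card {i | r i = j} := by
        simpa using Finset.card_eq_sum_card_fiberwise (f := r) (s := .univ) (t := .univ) (by simp)
      exact hcard.symm.trans_le hk
  simp only [continuousMultilinearMap_diag_eq_sum P, Finset.smul_sum]
  rw [integral_finsetSum _ fun r _ =>
    integrable_smul_of_support_subset_isCompact hρ hS hsupp (by fun_prop)]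
  refine Finset.sum_eq_zero fun r _ => ?_
  simp only [smul_smul, integral_smul_const, hmonomial, zero_smul]

end Coordinates

section CoulombKernel

variable {ι : Type*} [Fintype ι] {w : ι → ℝ}

/-- The Coulomb kernel `|z|⁻¹` for the norm with square `∑ i, w i * z i ^ 2`, up to a constant
factor. It takes the value `0` at the origin. -/
noncomputable def anisotropicCoulombKernel (w : ι → ℝ) (z : EuclideanSpace ℝ ι) : ℝ :=
  (√(∑ i, w i * z i ^ 2))⁻¹

theorem sum_mul_sq_pos (hw : ∀ i, 0 < w i) {z : EuclideanSpace ℝ ι} (hz : z ≠ 0) :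
    0 < ∑ i, w i * z i ^ 2 := by
  obtain ⟨i, hi⟩ : ∃ i, z i ≠ 0 := by
    contrapose! hz
    exact PiLp.ext hz
  exact Finset.sum_pos' (fun j _ => mul_nonneg (hw j).le (sq_nonneg _))
    ⟨i, Finset.mem_univ i, mul_pos (hw i) (by positivity)⟩

theorem contDiffAt_anisotropicCoulombKernel (hw : ∀ i, 0 < w i) {z : EuclideanSpace ℝ ι}
    (hz : z ≠ 0) {n : ℕ∞ω} : ContDiffAt ℝ n (anisotropicCoulombKernel w) z := by
  have hpos := sum_mul_sq_pos hw hz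
  have hquad : ContDiffAt ℝ n (fun z : EuclideanSpace ℝ ι => ∑ i, w i * z i ^ 2) z := by fun_prop
  exact (hquad.sqrt hpos.ne').inv (Real.sqrt_pos.2 hpos).ne'

theorem isPosHomogeneous_anisotropicCoulombKernel (w : ι → ℝ) :
    IsPosHomogeneous (anisotropicCoulombKernel w) (-1) := by
  intro r hr z
  have hquad : ∑ i, w i * (r • z) i ^ 2 = r ^ 2 * ∑ i, w i * z i ^ 2 := by
    rw [Finset.mul_sum]
    refine Finset.sum_congr rfl fun i _ => ?_
    rw [PiLp.smul_apply, smul_eq_mul]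
    ring
  rw [anisotropicCoulombKernel, hquad, Real.sqrt_mul (sq_nonneg r), Real.sqrt_sq hr.le, mul_inv,
    Real.rpow_neg_one, smul_eq_mul, anisotropicCoulombKernel]

end CoulombKernel

theorem anisotropic_coulomb_gradient_decay_seven_general {ι : Type*} [Fintype ι] {w : ι → ℝ}
    (hw : ∀ i, 0 < w i) {ρ : EuclideanSpace ℝ ι → ℝ} {μ : Measure (EuclideanSpace ℝ ι)}
    (hρ : Integrable ρ μ) {R : ℝ} (hsupp : Function.support ρ ⊆ closedBall 0 R) {n : ℕ}
    (hmom : ∀ α : ι → ℕ, ∑ i, α i ≤ n → ∫ y, (∏ i, y i ^ α i) * ρ y ∂μ = 0) (c : ℝ)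
    {u : EuclideanSpace ℝ ι → ℝ}
    (hu : ∀ x, u x = c * ∫ y, ρ y / √(∑ i, w i * (x i - y i) ^ 2) ∂μ) :
    (∀ x, R < ‖x‖ → DifferentiableAt ℝ u x) ∧
      ∃ C, ∀ x, 2 * R < ‖x‖ → ‖fderiv ℝ u x‖ ≤ C / ‖x‖ ^ (n + 3) := by
  set K := anisotropicCoulombKernel w
  have hK : ∀ z ≠ 0, ∀ k : ℕ∞ω, ContDiffAt ℝ k K z := fun z hz _ =>
    contDiffAt_anisotropicCoulombKernel hw hz
  have hu' : u = c • (ρ ⋆[lsmul ℝ ℝ, μ] K) := by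
    ext x
    simp [hu, convolution_lsmul, K, anisotropicCoulombKernel, div_eq_mul_inv]
  have hderiv : ∀ x, R < ‖x‖ → HasFDerivAt u (c • (ρ ⋆[lsmul ℝ ℝ, μ] fderiv ℝ K) x) x := by
    intro x hx
    rw [hu']
    exact (hasFDerivAt_convolution_of_contDiffAt_ne_zero hρ (isCompact_closedBall 0 R) hsupp
      (fun z hz => hK z hz 1) (by simpa using hx)).const_smul c
  obtain ⟨C, hC⟩ := (isPosHomogeneous_anisotropicCoulombKernel w).fderiv.exists_norm_convolution_le
    (by linarith) (fun z hz => (hK z hz ∞).fderiv_right (mod_cast le_top)) hρ hsupp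
    (hasVanishingMoments_of_integral_monomial_eq_zero hρ (isCompact_closedBall 0 R) hsupp hmom)
  refine ⟨fun x hx => (hderiv x hx).differentiableAt, ‖c‖ * C, fun x hx => ?_⟩
  have hexp : (-1 - 1 - (n + 1) : ℝ) = -(n + 3 : ℕ) := by
    push_cast
    ring
  rw [(hderiv x (by linarith [norm_nonneg x])).fderiv, norm_smul, mul_div_assoc, div_eq_mul_inv,
    ← Real.rpow_natCast, ← Real.rpow_neg (norm_nonneg x), ← hexp]
  gcongr
  exact hC x hx

/-- Decay `‖∇u(x)‖ ≤ C |x|^{-7}` of the gradient of the anisotropic Coulomb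
potential of a compactly supported continuous density whose moments up to
order `4` vanish. -/
theorem anisotropic_coulomb_gradient_decay_seven (rho : EuclideanSpace ℝ (Fin 3) → ℝ)
    (hrho : Continuous rho) (R : ℝ)
    (hsupp : Function.support rho ⊆ Metric.closedBall (0 : EuclideanSpace ℝ (Fin 3)) R)
    (hmom : ∀ α : Fin 3 → ℕ, α 0 + α 1 + α 2 ≤ 4 →
      (∫ y : EuclideanSpace ℝ (Fin 3),
        (y 0) ^ (α 0) * (y 1) ^ (α 1) * (y 2) ^ (α 2) * rho y) = 0)
    (v : ℝ) (hv0 : 0 ≤ v) (hv1 : v < 1)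
    (u : EuclideanSpace ℝ (Fin 3) → ℝ)
    (hu : ∀ x : EuclideanSpace ℝ (Fin 3),
      u x = ((1 / Real.sqrt (1 - v ^ 2)) / (4 * Real.pi)) *
        ∫ y : EuclideanSpace ℝ (Fin 3), rho y /
          Real.sqrt ((1 / Real.sqrt (1 - v ^ 2)) ^ 2 * (x 0 - y 0) ^ 2
            + (x 1 - y 1) ^ 2 + (x 2 - y 2) ^ 2)) :
    (∀ x : EuclideanSpace ℝ (Fin 3), R < ‖x‖ → DifferentiableAt ℝ u x) ∧
    ∃ C : ℝ, ∀ x : EuclideanSpace ℝ (Fin 3), 2 * R + 1 ≤ ‖x‖ →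
      ‖fderiv ℝ u x‖ ≤ C / ‖x‖ ^ 7 := by
  have hv : 0 < √(1 - v ^ 2) := Real.sqrt_pos.2 (by nlinarith)
  have hint : Integrable rho := hrho.integrable_of_hasCompactSupport
    (.of_support_subset_isCompact (isCompact_closedBall 0 R) hsupp)
  obtain ⟨hdiff, C, hC⟩ := anisotropic_coulomb_gradient_decay_seven_general
    (w := ![(1 / √(1 - v ^ 2)) ^ 2, 1, 1]) (by simp [Fin.forall_fin_succ, hv]) hint hsupp (n := 4)
    (by simpa [Fin.sum_univ_three, Fin.prod_univ_three] using hmom) _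
    (by simpa [Fin.sum_univ_three] using hu)
  exact ⟨hdiff, C, fun x hx => hC x (by linarith)⟩
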